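/- Under hypothesis (1.0), with φ(x) = ν(x,D) and δ = sup_{x∈(0,D)} μ(0,x)·ν(x,D), the ND principal eigenvalue satisfies δ^{-1} ≥ (δ₁')^{-1} ≥ λ₀ ≥ δ₁^{-1} ≥ (4δ)^{-1}, where δ₁ = sup_{x∈(0,D)} [ √(φ(x)) ∫₀ˣ √φ dμ + (1/√(φ(x))) ∫ₓ^D φ^{3/2} dμ ] and δ₁' = sup_{x∈(0,D)} [ μ(0,x)·φ(x) + (1/φ(x)) ∫ₓ^D φ² dμ ]; moreover δ ≤ δ₁' ≤ 2δ. -/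

import Mathlib

/-!
The estimates compare the weighted Hardy inequality `μ(f²) ≤ A D(f)` with explicit constants.
Throughout, `φ` is either finite everywhere or identically `∞` on `(0, D)`; in the second case
`δ = δ₁ = δ₁' = ∞` and the only thing to prove is `λ₀ = 0`.

*Comparison with `δ`.* The change of variables `t = φ(y)` carries `ν` to Lebesgue measure
(`lintegral_phi_rpow`), so `φ^{q+1}(x) = (q+1) ∫_x^D φ^q dν` for `q > -1` (`phi_rpow_tail`).
Writing powers of `φ` in the `μ`-integrals this way and exchanging the order of integration
(`tonelli`, `tonelli_split`) amounts to an integration by parts; inserting `μ(0,y) φ(y) ≤ δ` gives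
`δ₁' ≤ 2δ` (`delta1'_le`) and `δ₁ ≤ 4δ` (`delta1_le`).

*Lower bound `λ₀ ≥ δ₁⁻¹`.* This is a Schur test (`muL2_le`). With `F(y) = ∫_0^y √φ dμ`,
Cauchy-Schwarz bounds `f(x)²` by `∫_x^D e^C f'²/F · ∫_x^D F dν`, and by Tonelli the second factor
is `√φ(x)` times the expression whose supremum is `δ₁`. Integrating against `μ` in `x` turns
`1/F` into `1` and yields `μ(f²) ≤ δ₁ D(f)`.

*Upper bound `λ₀ ≤ (δ₁')⁻¹`.* The natural test function is `φ(· ∨ x)`, which has a corner at `x` and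
need not have compact support. It is the increasing limit of the admissible functions
`∫_·^D g dν`, with `g` continuous, vanishing near `D`, and increasing to the indicator of `(x, D)`
(`lam0_test`, `cutoff`). Monotone convergence gives
`λ₀ (μ(0,x) φ(x)² + ∫_x^D φ² dμ) ≤ φ(x)` (`lam0_mul_term_le`).
-/

open MeasureTheory Set Filter Topology ENNReal

noncomputable section

/-- The open interval `(0, D)` in `ℝ`, where `D : ℝ≥0∞` may be infinite. -/
def ooI (D : ℝ≥0∞) : Set ℝ := {x : ℝ | 0 < x ∧ ENNReal.ofReal x < D}

/-- The interval `[0, D)` in `ℝ`. -/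
def coI (D : ℝ≥0∞) : Set ℝ := {x : ℝ | 0 ≤ x ∧ ENNReal.ofReal x < D}

/-- The interval `[0, D]` in `ℝ` (conventionally `[0, ∞)` when `D = ∞`). -/
def ccI (D : ℝ≥0∞) : Set ℝ := {x : ℝ | 0 ≤ x ∧ ENNReal.ofReal x ≤ D}

/-- `C(x) = ∫_0^x b(u)/a(u) du`. -/
def Cf (a b : ℝ → ℝ) (x : ℝ) : ℝ := ∫ u in Set.Ioo 0 x, b u / a u

/-- The measure `μ(dx) = (e^{C(x)}/a(x)) dx` on `(0, D)`. -/
def muM (a b : ℝ → ℝ) (D : ℝ≥0∞) : Measure ℝ :=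
  (volume.restrict (ooI D)).withDensity fun x => ENNReal.ofReal (Real.exp (Cf a b x) / a x)

/-- The measure `ν(dx) = e^{-C(x)} dx` on `(0, D)`. -/
def nuM (a b : ℝ → ℝ) (D : ℝ≥0∞) : Measure ℝ :=
  (volume.restrict (ooI D)).withDensity fun x => ENNReal.ofReal (Real.exp (-Cf a b x))

/-- Hypothesis (1.0): `a`, `b` Borel measurable, `a > 0` on `(0,D)`, and `b/a`, `e^C/a`
locally integrable on `[0, D]`. -/
def Hyp (a b : ℝ → ℝ) (D : ℝ≥0∞) : Prop :=
  Measurable a ∧ Measurable b ∧ (∀ x ∈ ooI D, 0 < a x) ∧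
    ∀ p : ℝ, 0 ≤ p → ENNReal.ofReal p ≤ D →
      IntegrableOn (fun u => b u / a u) (Set.Icc 0 p) ∧
      IntegrableOn (fun u => Real.exp (Cf a b u) / a u) (Set.Icc 0 p)

/-- `f ∈ C¹(0,D) ∩ C[0,D]`. -/
def C1C (D : ℝ≥0∞) (f : ℝ → ℝ) : Prop :=
  ContinuousOn f (ccI D) ∧ (∀ x ∈ ooI D, DifferentiableAt ℝ f x) ∧
    ContinuousOn (deriv f) (ooI D)

/-- The Dirichlet form `D(f) = ∫_0^D e^{C} f'^2 dx`. -/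
def Dform (a b : ℝ → ℝ) (D : ℝ≥0∞) (f : ℝ → ℝ) : ℝ≥0∞ :=
  ∫⁻ x in ooI D, ENNReal.ofReal (Real.exp (Cf a b x) * deriv f x ^ 2)

/-- `μ(f²)`. -/
def muL2 (a b : ℝ → ℝ) (D : ℝ≥0∞) (f : ℝ → ℝ) : ℝ≥0∞ :=
  ∫⁻ x, ENNReal.ofReal (f x ^ 2) ∂(muM a b D)

/-- The ND (Neumann at `0`, Dirichlet at `D`) principal eigenvalue `λ₀`, defined with
compactly supported test functions. -/
def lam0 (a b : ℝ → ℝ) (D : ℝ≥0∞) : ℝ≥0∞ :=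
  sInf {r | ∃ f : ℝ → ℝ, C1C D f ∧
    (∃ p : ℝ, 0 ≤ p ∧ ENNReal.ofReal p < D ∧ ∀ x, p < x → f x = 0) ∧
    (D ≠ ∞ → f D.toReal = 0) ∧ muL2 a b D f = 1 ∧ r = Dform a b D f}

/-- `δ = sup_{x ∈ (0,D)} μ(0,x) ν(x,D)`. -/
def deltaND (a b : ℝ → ℝ) (D : ℝ≥0∞) : ℝ≥0∞ :=
  ⨆ x ∈ ooI D, muM a b D (Set.Ioo 0 x) * nuM a b D (Set.Ioi x)

/-- `φ(x) = ν(x, D)`. -/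
def phiE (a b : ℝ → ℝ) (D : ℝ≥0∞) (x : ℝ) : ℝ≥0∞ := nuM a b D (Set.Ioi x)

/-- `δ₁ = sup_{x∈(0,D)} ( √(φ(x)) ∫_0^x √φ dμ + (1/√(φ(x))) ∫_x^D φ^{3/2} dμ )`. -/
def delta1 (a b : ℝ → ℝ) (D : ℝ≥0∞) : ℝ≥0∞ :=
  ⨆ x ∈ ooI D,
    (phiE a b D x ^ (1 / 2 : ℝ) *
        ∫⁻ u in Set.Ioo 0 x, phiE a b D u ^ (1 / 2 : ℝ) ∂(muM a b D)) +
      (∫⁻ u in Set.Ioi x, phiE a b D u ^ (3 / 2 : ℝ) ∂(muM a b D)) /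
        phiE a b D x ^ (1 / 2 : ℝ)

/-- `δ₁' = sup_{x∈(0,D)} ( μ(0,x) φ(x) + (1/φ(x)) ∫_x^D φ² dμ )`. -/
def delta1' (a b : ℝ → ℝ) (D : ℝ≥0∞) : ℝ≥0∞ :=
  ⨆ x ∈ ooI D,
    muM a b D (Set.Ioo 0 x) * phiE a b D x +
      (∫⁻ u in Set.Ioi x, phiE a b D u ^ 2 ∂(muM a b D)) / phiE a b D x

/-! ### The interval, the function `C` and the measures -/

theorem isOpen_ooI (D : ℝ≥0∞) : IsOpen (ooI D) :=
  (isOpen_lt continuous_const continuous_id).inter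
    (isOpen_lt ENNReal.continuous_ofReal continuous_const)

theorem measurableSet_ooI (D : ℝ≥0∞) : MeasurableSet (ooI D) := (isOpen_ooI D).measurableSet

theorem ooI_of_le {D : ℝ≥0∞} {x y : ℝ} (hx : 0 < x) (hxy : x ≤ y) (hy : y ∈ ooI D) :
    x ∈ ooI D :=
  ⟨hx, (ENNReal.ofReal_le_ofReal hxy).trans_lt hy.2⟩

theorem Icc_subset_ooI {D : ℝ≥0∞} {x y : ℝ} (hx : x ∈ ooI D) (hy : y ∈ ooI D) :
    Icc x y ⊆ ooI D :=
  fun _ hz => ooI_of_le (hx.1.trans_le hz.1) hz.2 hy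

theorem convex_ooI (D : ℝ≥0∞) : Convex ℝ (ooI D) := by
  have : (ooI D).OrdConnected := ⟨fun x hx y hy => Icc_subset_ooI hx hy⟩
  exact this.convex

/-- An increasing sequence in `(0, D)` that exhausts the interval from the left; it treats
`D < ∞` and `D = ∞` uniformly. -/
theorem exists_exhaust {D : ℝ≥0∞} (hD : 0 < D) :
    ∃ d : ℕ → ℝ, Monotone d ∧ (∀ n, d n ∈ ooI D) ∧ ∀ y ∈ ooI D, ∃ n, y < d n := by
  obtain ⟨u, hu, hm, ht⟩ := exists_seq_strictMono_tendsto' hD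
  have hfin : ∀ n, u n ≠ ∞ := fun n => ((hm n).2.trans_le le_top).ne
  refine ⟨fun n => (u n).toReal, fun i j hij =>
    ENNReal.toReal_mono (hfin j) (hu.monotone hij), fun n => ⟨?_, ?_⟩, fun y hy => ?_⟩
  · exact ENNReal.toReal_pos (hm n).1.ne' (hfin n)
  · rw [ENNReal.ofReal_toReal (hfin n)]; exact (hm n).2
  · obtain ⟨n, hn⟩ := (ht.eventually (lt_mem_nhds hy.2)).exists
    exact ⟨n, (ENNReal.ofReal_lt_iff_lt_toReal hy.1.le (hfin n)).1 hn⟩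

theorem exists_gt_ooI {D : ℝ≥0∞} {x : ℝ} (hx : x ∈ ooI D) : ∃ p ∈ ooI D, x < p := by
  obtain ⟨d, -, hd, hd'⟩ := exists_exhaust (bot_le.trans_lt hx.2)
  obtain ⟨n, hn⟩ := hd' x hx
  exact ⟨d n, hd n, hn⟩

theorem measurable_Cf {a b : ℝ → ℝ} (ha : Measurable a) (hb : Measurable b) :
    Measurable (Cf a b) := by
  have hS : MeasurableSet {p : ℝ × ℝ | 0 < p.2 ∧ p.2 < p.1} :=
    (measurableSet_lt measurable_const measurable_snd).inter
      (measurableSet_lt measurable_snd measurable_fst)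
  have h : StronglyMeasurable (fun p : ℝ × ℝ =>
      {p : ℝ × ℝ | 0 < p.2 ∧ p.2 < p.1}.indicator (fun p => b p.2 / a p.2) p) :=
    (((hb.comp measurable_snd).div (ha.comp measurable_snd)).indicator hS).stronglyMeasurable
  have h2 := (h.integral_prod_right' (ν := (volume : Measure ℝ))).measurable
  convert h2 using 2 with x
  unfold Cf
  rw [← integral_indicator measurableSet_Ioo]
  congr 1 with u

theorem continuousOn_Cf {a b : ℝ → ℝ} {D : ℝ≥0∞} (hyp : Hyp a b D) {p : ℝ} (hp : p ∈ ooI D) :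
    ContinuousOn (Cf a b) (Icc 0 p) := by
  have h := intervalIntegral.continuousOn_primitive ((hyp.2.2.2 p hp.1.le hp.2.le).1)
  refine h.congr fun x _ => ?_
  simp only [Cf]
  rw [integral_Ioc_eq_integral_Ioo]

theorem continuousAt_Cf {a b : ℝ → ℝ} {D : ℝ≥0∞} (hyp : Hyp a b D) {x : ℝ} (hx : x ∈ ooI D) :
    ContinuousAt (Cf a b) x := by
  obtain ⟨p, hp, hxp⟩ := exists_gt_ooI hx
  exact (continuousOn_Cf hyp hp).continuousAt (Icc_mem_nhds hx.1 hxp)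

/-- The density of `μ`. -/
def dMu (a b : ℝ → ℝ) (x : ℝ) : ℝ≥0∞ := ENNReal.ofReal (Real.exp (Cf a b x) / a x)

/-- The density of `ν`. -/
def dNu (a b : ℝ → ℝ) (x : ℝ) : ℝ≥0∞ := ENNReal.ofReal (Real.exp (-Cf a b x))

section
variable {a b : ℝ → ℝ} {D : ℝ≥0∞}

theorem measurable_dMu (hyp : Hyp a b D) : Measurable (dMu a b) :=
  (((measurable_Cf hyp.1 hyp.2.1).exp).div hyp.1).ennreal_ofReal

theorem measurable_dNu (hyp : Hyp a b D) : Measurable (dNu a b) :=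
  ((measurable_Cf hyp.1 hyp.2.1).neg.exp).ennreal_ofReal

theorem lintegral_muM (hyp : Hyp a b D) {f : ℝ → ℝ≥0∞} {s : Set ℝ} (hs : MeasurableSet s) :
    ∫⁻ x in s, f x ∂(muM a b D) = ∫⁻ x in s ∩ ooI D, dMu a b x * f x := by
  unfold muM
  rw [restrict_withDensity hs, Measure.restrict_restrict hs]
  exact lintegral_withDensity_eq_lintegral_mul_non_measurable _ (measurable_dMu hyp)
    (Eventually.of_forall fun _ => ENNReal.ofReal_lt_top) _

theorem lintegral_nuM (hyp : Hyp a b D) {f : ℝ → ℝ≥0∞} {s : Set ℝ} (hs : MeasurableSet s) :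
    ∫⁻ x in s, f x ∂(nuM a b D) = ∫⁻ x in s ∩ ooI D, dNu a b x * f x := by
  unfold nuM
  rw [restrict_withDensity hs, Measure.restrict_restrict hs]
  exact lintegral_withDensity_eq_lintegral_mul_non_measurable _ (measurable_dNu hyp)
    (Eventually.of_forall fun _ => ENNReal.ofReal_lt_top) _

instance : SFinite (muM a b D) := by unfold muM; infer_instance
instance : SFinite (nuM a b D) := by unfold nuM; infer_instance

theorem muM_ac : muM a b D ≪ volume.restrict (ooI D) := withDensity_absolutelyContinuous _ _

theorem nuM_ac : nuM a b D ≪ volume.restrict (ooI D) := withDensity_absolutelyContinuous _ _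

theorem ae_muM : ∀ᵐ x ∂(muM a b D), x ∈ ooI D :=
  muM_ac.ae_le (ae_restrict_mem (measurableSet_ooI D))

theorem ae_nuM : ∀ᵐ x ∂(nuM a b D), x ∈ ooI D :=
  nuM_ac.ae_le (ae_restrict_mem (measurableSet_ooI D))

theorem ae_ne_muM (x : ℝ) : ∀ᵐ y ∂(muM a b D), y ≠ x :=
  muM_ac.ae_le (Measure.ae_ne _ x)

theorem ae_ne_nuM (x : ℝ) : ∀ᵐ y ∂(nuM a b D), y ≠ x :=
  nuM_ac.ae_le (Measure.ae_ne _ x)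

theorem Iio_ae_muM (x : ℝ) : (Iio x : Set ℝ) =ᵐ[muM a b D] Ioo 0 x := by
  filter_upwards [ae_muM] with y hy
  exact propext ⟨fun h => ⟨hy.1, h⟩, fun h => h.2⟩

theorem Iic_ae_muM (x : ℝ) : (Iic x : Set ℝ) =ᵐ[muM a b D] Ioo 0 x := by
  filter_upwards [ae_muM, ae_ne_muM x] with y hy hn
  exact propext ⟨fun h => ⟨hy.1, lt_of_le_of_ne h hn⟩, fun h => h.2.le⟩

theorem dNu_pos (x : ℝ) : 0 < dNu a b x := ENNReal.ofReal_pos.2 (Real.exp_pos _)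

theorem dMu_pos (hyp : Hyp a b D) {x : ℝ} (hx : x ∈ ooI D) : 0 < dMu a b x :=
  ENNReal.ofReal_pos.2 (div_pos (Real.exp_pos _) (hyp.2.2.1 x hx))

/-- Integrals of positive functions against `μ` over `(0, x)` are positive. -/
theorem lintegral_muM_pos (hyp : Hyp a b D) {x : ℝ} (hx : x ∈ ooI D) {f : ℝ → ℝ≥0∞}
    (hf : Measurable f) (hpos : ∀ u ∈ Ioo 0 x, 0 < f u) :
    0 < ∫⁻ u in Ioo 0 x, f u ∂(muM a b D) := by
  have hI : Ioo 0 x ∩ ooI D = Ioo 0 x :=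
    inter_eq_left.2 fun u hu => ooI_of_le hu.1 hu.2.le hx
  rw [lintegral_muM hyp measurableSet_Ioo, hI,
    setLIntegral_pos_iff (f := fun u => dMu a b u * f u) ((measurable_dMu hyp).mul hf)]
  have : Function.support (fun u => dMu a b u * f u) ∩ Ioo 0 x = Ioo 0 x :=
    inter_eq_right.2 fun u hu =>
      (ENNReal.mul_pos (dMu_pos hyp (ooI_of_le hu.1 hu.2.le hx)).ne' (hpos u hu).ne').ne'
  rw [this]
  simpa using hx.1

theorem muM_pos (hyp : Hyp a b D) {x : ℝ} (hx : x ∈ ooI D) : 0 < muM a b D (Ioo 0 x) := by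
  simpa using lintegral_muM_pos hyp hx (f := fun _ => 1) measurable_const (by simp)

theorem muM_lt_top (hyp : Hyp a b D) {x : ℝ} (hx : x ∈ ooI D) : muM a b D (Iic x) < ∞ := by
  have h := (hyp.2.2.2 x hx.1.le hx.2.le).2.lintegral_lt_top
  rw [measure_congr (Iic_ae_muM x), ← setLIntegral_one, lintegral_muM hyp measurableSet_Ioo]
  simp only [mul_one]
  exact (lintegral_mono_set (inter_subset_left.trans Ioo_subset_Icc_self)).trans_lt h

theorem nuM_lt_top (hyp : Hyp a b D) {x : ℝ} (hx : x ∈ ooI D) : nuM a b D (Iic x) < ∞ := by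
  have h : IntegrableOn (fun y => Real.exp (-Cf a b y)) (Icc 0 x) :=
    ((continuousOn_Cf hyp hx).neg.rexp).integrableOn_Icc
  rw [← setLIntegral_one, lintegral_nuM hyp measurableSet_Iic]
  simp only [mul_one]
  refine (lintegral_mono_set ?_).trans_lt h.lintegral_lt_top
  exact fun y hy => ⟨hy.2.1.le, hy.1⟩

theorem antitone_phiE : Antitone (phiE a b D) :=
  fun _ _ h => measure_mono (Ioi_subset_Ioi h)

theorem measurable_phiE : Measurable (phiE a b D) := antitone_phiE.measurable

theorem phiE_split {x y : ℝ} (h : x ≤ y) :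
    phiE a b D x = nuM a b D (Ioc x y) + phiE a b D y := by
  unfold phiE
  rw [← measure_union (Ioc_disjoint_Ioi le_rfl) measurableSet_Ioi,
    Ioc_union_Ioi_eq_Ioi h]

theorem phiE_pos (hyp : Hyp a b D) {x : ℝ} (hx : x ∈ ooI D) : 0 < phiE a b D x := by
  obtain ⟨p, hp, hxp⟩ := exists_gt_ooI hx
  unfold phiE
  rw [← setLIntegral_one, lintegral_nuM hyp measurableSet_Ioi,
    setLIntegral_pos_iff (f := fun u => dNu a b u * 1)
      ((measurable_dNu hyp).mul measurable_const)]
  have : Function.support (fun u => dNu a b u * 1) = univ := by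
    ext u; simpa using (dNu_pos u).ne'
  rw [this, univ_inter]
  refine lt_of_lt_of_le ?_ (measure_mono (?_ : Ioo x p ⊆ _))
  · simpa using hxp
  · exact fun y hy => ⟨hy.1, ooI_of_le (hx.1.trans hy.1) hy.2.le hp⟩

theorem phiE_lt_top (hyp : Hyp a b D) {x y : ℝ} (hx : x ∈ ooI D) (h : phiE a b D x ≠ ∞) :
    phiE a b D y < ∞ := by
  rcases le_total x y with hxy | hxy
  · exact (antitone_phiE hxy).trans_lt h.lt_top
  · rw [phiE_split hxy]
    exact ENNReal.add_lt_top.2 ⟨(measure_mono Ioc_subset_Iic_self).trans_lt (nuM_lt_top hyp hx),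
      h.lt_top⟩

/-- Tonelli's theorem over the triangle `{u < y}`. -/
theorem tonelli (μ ν : Measure ℝ) [SFinite μ] [SFinite ν] {k G : ℝ → ℝ≥0∞}
    (hk : Measurable k) (hG : Measurable G) :
    ∫⁻ u, k u * ∫⁻ y in Ioi u, G y ∂ν ∂μ = ∫⁻ y, G y * ∫⁻ u in Iio y, k u ∂μ ∂ν := by
  have hS : MeasurableSet {p : ℝ × ℝ | p.1 < p.2} := measurableSet_lt measurable_fst measurable_snd
  have hm : Measurable (fun p : ℝ × ℝ =>
      {p : ℝ × ℝ | p.1 < p.2}.indicator (fun p => k p.1 * G p.2) p) :=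
    ((hk.comp measurable_fst).mul (hG.comp measurable_snd)).indicator hS
  calc ∫⁻ u, k u * ∫⁻ y in Ioi u, G y ∂ν ∂μ
      = ∫⁻ u, ∫⁻ y, {p : ℝ × ℝ | p.1 < p.2}.indicator (fun p => k p.1 * G p.2) (u, y) ∂ν ∂μ := by
        refine lintegral_congr fun u => ?_
        rw [← lintegral_const_mul _ hG, ← lintegral_indicator measurableSet_Ioi]
        rfl
    _ = ∫⁻ y, ∫⁻ u, {p : ℝ × ℝ | p.1 < p.2}.indicator (fun p => k p.1 * G p.2) (u, y) ∂μ ∂ν :=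
        lintegral_lintegral_swap hm.aemeasurable
    _ = _ := by
        refine lintegral_congr fun y => ?_
        rw [← lintegral_const_mul _ hk, ← lintegral_indicator measurableSet_Iio]
        refine lintegral_congr fun u => ?_
        simp only [indicator, mem_ofPred_eq, mem_Iio]
        split_ifs <;> simp [mul_comm]

end

/-! ### The function `φ` as a change of variables -/

section
variable {a b : ℝ → ℝ} {D : ℝ≥0∞}

/-- Where `φ` is finite it is an antiderivative of `-e^{-C}`. -/
theorem hasDerivAt_phi (hyp : Hyp a b D) (hfin : ∀ y, phiE a b D y ≠ ∞) {x : ℝ}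
    (hx : x ∈ ooI D) :
    HasDerivAt (fun y => (phiE a b D y).toReal) (-Real.exp (-Cf a b x)) x := by
  obtain ⟨p, hp, hxp⟩ := exists_gt_ooI hx
  have hint : IntegrableOn (fun y => Real.exp (-Cf a b y)) (Icc 0 p) :=
    ((continuousOn_Cf hyp hp).neg.rexp).integrableOn_Icc
  have hd : HasDerivAt (fun y => (∫ t in y..p, Real.exp (-Cf a b t)) + (phiE a b D p).toReal)
      (-Real.exp (-Cf a b x)) x := by
    refine (intervalIntegral.integral_hasDerivAt_left ?_ ?_ ?_).add_const _
    · rw [intervalIntegrable_iff_integrableOn_Ioc_of_le hxp.le]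
      exact hint.mono_set fun y hy => ⟨(hx.1.trans hy.1).le, hy.2⟩
    · exact (measurable_Cf hyp.1 hyp.2.1).neg.exp.stronglyMeasurable.stronglyMeasurableAtFilter
    · exact (continuousAt_Cf hyp hx).neg.rexp
  refine hd.congr_of_eventuallyEq ?_
  filter_upwards [Ioo_mem_nhds hx.1 hxp] with y hy
  have hI : Ioc y p ∩ ooI D = Ioc y p :=
    inter_eq_left.2 fun u hu => ooI_of_le (hy.1.trans hu.1) hu.2 hp
  have hn : nuM a b D (Ioc y p) = ENNReal.ofReal (∫ t in y..p, Real.exp (-Cf a b t)) := by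
    rw [← setLIntegral_one, lintegral_nuM hyp measurableSet_Ioc, hI,
      intervalIntegral.integral_of_le hy.2.le, ofReal_integral_eq_lintegral_ofReal]
    · simp [dNu]
    · exact hint.mono_set fun z hz => ⟨(hy.1.trans hz.1).le, hz.2⟩
    · exact Eventually.of_forall fun _ => (Real.exp_pos _).le
  rw [phiE_split hy.2.le, hn, ENNReal.toReal_add ENNReal.ofReal_ne_top (hfin p),
    ENNReal.toReal_ofReal]
  exact intervalIntegral.integral_nonneg hy.2.le fun _ _ => (Real.exp_pos _).le

theorem strictAntiOn_phi (hyp : Hyp a b D) (hfin : ∀ y, phiE a b D y ≠ ∞) :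
    StrictAntiOn (fun y => (phiE a b D y).toReal) (ooI D) := by
  refine strictAntiOn_of_deriv_neg (convex_ooI D)
    (fun x hx => (hasDerivAt_phi hyp hfin hx).continuousAt.continuousWithinAt) fun x hx => ?_
  rw [(hasDerivAt_phi hyp hfin (interior_subset hx)).deriv]
  exact neg_lt_zero.2 (Real.exp_pos _)

/-- Change of variables `t = φ(y)`: for finite `φ`, `φ` carries `ν` on `s ⊆ (0, D)` to Lebesgue
measure on `φ(s)`. -/
theorem lintegral_phi_rpow (hyp : Hyp a b D) (hfin : ∀ y, phiE a b D y ≠ ∞) {s : Set ℝ}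
    (hs : MeasurableSet s) (hsI : s ⊆ ooI D) (q : ℝ) :
    ∫⁻ y in s, phiE a b D y ^ q ∂(nuM a b D) =
      ∫⁻ t in (fun y => (phiE a b D y).toReal) '' s, ENNReal.ofReal t ^ q := by
  rw [lintegral_image_eq_lintegral_abs_deriv_mul hs
    (fun x hx => (hasDerivAt_phi hyp hfin (hsI hx)).hasDerivWithinAt)
    ((strictAntiOn_phi hyp hfin).injOn.mono hsI), lintegral_nuM hyp hs, inter_eq_left.2 hsI]
  refine lintegral_congr fun y => ?_
  rw [ENNReal.ofReal_toReal (hfin y), abs_neg, Real.abs_exp]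
  rfl

/-- `φ(y) → 0` as `y → D`. -/
theorem exists_phi_lt (hfin : ∀ y, phiE a b D y ≠ ∞) (hD : 0 < D) {t : ℝ≥0∞} (ht : 0 < t) :
    ∃ n ∈ ooI D, phiE a b D n < t := by
  obtain ⟨d, hm, hd, hd'⟩ := exists_exhaust hD
  have h := tendsto_measure_iInter_atTop (μ := nuM a b D) (s := fun n => Ioi (d n))
    (fun n => measurableSet_Ioi.nullMeasurableSet) (fun i j hij => Ioi_subset_Ioi (hm hij))
    ⟨0, hfin _⟩
  have h0 : nuM a b D (⋂ n, Ioi (d n)) = 0 := by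
    rw [measure_eq_zero_iff_ae_notMem]
    filter_upwards [ae_nuM] with y hy hmem
    obtain ⟨n, hn⟩ := hd' y hy
    exact lt_asymm hn (mem_iInter.1 hmem n)
  rw [h0] at h
  obtain ⟨n, hn⟩ := (h.eventually (gt_mem_nhds ht)).exists
  exact ⟨d n, hd n, hn⟩

theorem image_phi_Ioi (hyp : Hyp a b D) (hfin : ∀ y, phiE a b D y ≠ ∞) {x : ℝ}
    (hx : x ∈ ooI D) :
    (fun y => (phiE a b D y).toReal) '' (Ioi x ∩ ooI D) = Ioo 0 (phiE a b D x).toReal := by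
  ext t
  constructor
  · rintro ⟨y, ⟨hxy, hy⟩, rfl⟩
    exact ⟨ENNReal.toReal_pos (phiE_pos hyp hy).ne' (hfin y), strictAntiOn_phi hyp hfin hx hy hxy⟩
  · rintro ⟨h0, h1⟩
    obtain ⟨z, hz, hzt⟩ := exists_phi_lt hfin (bot_le.trans_lt hx.2) (ENNReal.ofReal_pos.2 h0)
    have hzt' : (phiE a b D z).toReal < t := (ENNReal.lt_ofReal_iff_toReal_lt (hfin z)).1 hzt
    have hxz : x ≤ z := ((strictAntiOn_phi hyp hfin).lt_iff_gt hz hx).1 (hzt'.trans h1) |>.le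
    obtain ⟨w, hw, hwt⟩ := intermediate_value_Icc' hxz
      (fun y hy => (hasDerivAt_phi hyp hfin
        (Icc_subset_ooI hx hz hy)).continuousAt.continuousWithinAt) ⟨hzt'.le, h1.le⟩
    refine ⟨w, ⟨lt_of_le_of_ne hw.1 ?_, Icc_subset_ooI hx hz hw⟩, hwt⟩
    rintro rfl
    exact h1.ne' hwt

theorem lintegral_Ioo_rpow {c q : ℝ} (hc : 0 ≤ c) (hq : -1 < q) :
    ENNReal.ofReal (q + 1) * ∫⁻ t in Ioo 0 c, ENNReal.ofReal t ^ q
      = ENNReal.ofReal (c ^ (q + 1)) := by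
  have h1 : ∫⁻ t in Ioo 0 c, ENNReal.ofReal t ^ q = ∫⁻ t in Ioo 0 c, ENNReal.ofReal (t ^ q) :=
    setLIntegral_congr_fun measurableSet_Ioo fun t ht => ENNReal.ofReal_rpow_of_pos ht.1
  have hi : IntegrableOn (fun t : ℝ => t ^ q) (Ioo 0 c) := by
    have := intervalIntegral.intervalIntegrable_rpow' (a := 0) (b := c) hq
    rw [intervalIntegrable_iff_integrableOn_Ioc_of_le hc] at this
    exact this.mono_set Ioo_subset_Ioc_self
  rw [h1, ← ofReal_integral_eq_lintegral_ofReal hi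
    ((ae_restrict_mem measurableSet_Ioo).mono fun t ht => Real.rpow_nonneg ht.1.le _),
    ← integral_Ioc_eq_integral_Ioo, ← intervalIntegral.integral_of_le hc,
    integral_rpow (Or.inl hq), ← ENNReal.ofReal_mul (by linarith),
    Real.zero_rpow (by linarith), sub_zero, mul_div_cancel₀ _ (by linarith)]

/-- `φ^{q+1}` is `(q+1)` times the `ν`-tail integral of `φ^q`, for `q > -1`. -/
theorem phi_rpow_tail (hyp : Hyp a b D) (hfin : ∀ y, phiE a b D y ≠ ∞) {x : ℝ}
    (hx : x ∈ ooI D) {q : ℝ} (hq : -1 < q) :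
    ENNReal.ofReal (q + 1) * ∫⁻ y in Ioi x, phiE a b D y ^ q ∂(nuM a b D) =
      phiE a b D x ^ (q + 1) := by
  have h : ∫⁻ y in Ioi x, phiE a b D y ^ q ∂(nuM a b D) =
      ∫⁻ y in Ioi x ∩ ooI D, phiE a b D y ^ q ∂(nuM a b D) := by
    refine setLIntegral_congr ?_
    filter_upwards [ae_nuM] with y hy
    exact propext ⟨fun h => ⟨h, hy⟩, fun h => h.1⟩
  rw [h, lintegral_phi_rpow hyp hfin (measurableSet_Ioi.inter (measurableSet_ooI D))
    inter_subset_right, image_phi_Ioi hyp hfin hx,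
    lintegral_Ioo_rpow ENNReal.toReal_nonneg hq,
    ← ENNReal.ofReal_rpow_of_nonneg ENNReal.toReal_nonneg (by linarith),
    ENNReal.ofReal_toReal (hfin x)]

/-- The bound `∫_0^x φ^{-3/2} dν ≤ 2 φ(x)^{-1/2}`, from enlarging the range of `t = φ(y)` to
`(φ(x), ∞)`. -/
theorem phi_rpow_head (hyp : Hyp a b D) (hfin : ∀ y, phiE a b D y ≠ ∞) {x : ℝ}
    (hx : x ∈ ooI D) :
    ∫⁻ y in Ioo 0 x, phiE a b D y ^ (-3 / 2 : ℝ) ∂(nuM a b D) ≤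
      2 * phiE a b D x ^ (-1 / 2 : ℝ) := by
  have hsub : Ioo 0 x ⊆ ooI D := fun y hy => ooI_of_le hy.1 hy.2.le hx
  have hc : 0 < (phiE a b D x).toReal := ENNReal.toReal_pos (phiE_pos hyp hx).ne' (hfin x)
  rw [lintegral_phi_rpow hyp hfin measurableSet_Ioo hsub]
  calc _ ≤ ∫⁻ t in Ioi (phiE a b D x).toReal, ENNReal.ofReal t ^ (-3 / 2 : ℝ) := by
        refine lintegral_mono_set ?_
        rintro _ ⟨y, hy, rfl⟩
        exact strictAntiOn_phi hyp hfin (hsub hy) hx hy.2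
    _ = ∫⁻ t in Ioi (phiE a b D x).toReal, ENNReal.ofReal (t ^ (-3 / 2 : ℝ)) :=
        setLIntegral_congr_fun measurableSet_Ioi fun t ht =>
          ENNReal.ofReal_rpow_of_pos (hc.trans ht)
    _ = ENNReal.ofReal (2 * (phiE a b D x).toReal ^ (-1 / 2 : ℝ)) := by
        rw [← ofReal_integral_eq_lintegral_ofReal
          (integrableOn_Ioi_rpow_of_lt (by norm_num) hc)
          ((ae_restrict_mem measurableSet_Ioi).mono
            fun t ht => Real.rpow_nonneg (hc.trans ht).le _),
          integral_Ioi_rpow_of_lt (by norm_num) hc]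
        congr 1
        norm_num
        ring
    _ = _ := by
        rw [ENNReal.ofReal_mul zero_le_two, ← ENNReal.ofReal_rpow_of_pos hc,
          ENNReal.ofReal_toReal (hfin x)]
        norm_num

end

/-! ### Comparison of `δ₁` and `δ₁'` with `δ` -/

section
variable {a b : ℝ → ℝ} {D : ℝ≥0∞}

theorem Iic_ae_nuM (x : ℝ) : (Iic x : Set ℝ) =ᵐ[nuM a b D] Ioo 0 x := by
  filter_upwards [ae_nuM, ae_ne_nuM x] with y hy hn
  exact propext ⟨fun h => ⟨hy.1, lt_of_le_of_ne h hn⟩, fun h => h.2.le⟩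

theorem le_deltaND {x : ℝ} (hx : x ∈ ooI D) :
    muM a b D (Ioo 0 x) * phiE a b D x ≤ deltaND a b D :=
  le_iSup₂ (f := fun x (_ : x ∈ ooI D) => muM a b D (Set.Ioo 0 x) * nuM a b D (Set.Ioi x)) x hx

/-- Tonelli for the double integral over `{u < y, y > x}`, split according to whether `u ≤ x`.
It is the common source of the two summands in `δ₁` and in `δ₁'`. -/
theorem tonelli_split {k G : ℝ → ℝ≥0∞} (hk : Measurable k) (hG : Measurable G) (x : ℝ) :
    ∫⁻ y in Ioi x, G y * ∫⁻ u in Ioo 0 y, k u ∂(muM a b D) ∂(nuM a b D) =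
      (∫⁻ u in Ioo 0 x, k u ∂(muM a b D)) * ∫⁻ y in Ioi x, G y ∂(nuM a b D) +
        ∫⁻ u in Ioi x, k u * ∫⁻ y in Ioi u, G y ∂(nuM a b D) ∂(muM a b D) := by
  have h1 : ∀ y, ∫⁻ u in Ioo 0 y, k u ∂(muM a b D) = ∫⁻ u in Iio y, k u ∂(muM a b D) :=
    fun y => (setLIntegral_congr (Iio_ae_muM y)).symm
  simp only [h1]
  rw [← tonelli _ _ hk hG, ← lintegral_add_compl _ (measurableSet_Iic (a := x)), compl_Iic]
  congr 1
  · rw [← lintegral_mul_const _ hk, setLIntegral_congr (Iio_ae_muM x),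
      ← setLIntegral_congr (Iic_ae_muM x)]
    refine setLIntegral_congr_fun measurableSet_Iic fun u hu => ?_
    rw [Measure.restrict_restrict measurableSet_Ioi, Ioi_inter_Ioi, sup_eq_right.2 hu]
  · refine setLIntegral_congr_fun measurableSet_Ioi fun u hu => ?_
    rw [Measure.restrict_restrict measurableSet_Ioi, Ioi_inter_Ioi, sup_eq_left.2 (le_of_lt hu)]

/-- Integration by parts for `∫_x^D φ^{q+2} dμ`: the boundary term `μ(0,x) φ(x)^{q+2}` is kept on the
left, and `μ(0,y) φ(y) ≤ δ` is inserted in the remaining integral. The case `q = 0` gives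
`δ₁' ≤ 2δ`, and `q = -1/2` handles the second summand of `δ₁`. -/
theorem phi_rpow_tail_bound (hyp : Hyp a b D) (hfin : ∀ y, phiE a b D y ≠ ∞) {x : ℝ}
    (hx : x ∈ ooI D) {q : ℝ} (hq : -1 < q) :
    ENNReal.ofReal (q + 1) * (muM a b D (Ioo 0 x) * phiE a b D x ^ (q + 2) +
        ∫⁻ u in Ioi x, phiE a b D u ^ (q + 2) ∂(muM a b D)) ≤
      ENNReal.ofReal (q + 2) * deltaND a b D * phiE a b D x ^ (q + 1) := by
  have hm : ∀ r : ℝ, Measurable (fun y => phiE a b D y ^ r) :=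
    fun r => measurable_phiE.pow_const r
  have htail : ∀ u ∈ ooI D, ∫⁻ y in Ioi u, ENNReal.ofReal (q + 2) * phiE a b D y ^ (q + 1)
      ∂(nuM a b D) = phiE a b D u ^ (q + 2) := fun u hu => by
    rw [lintegral_const_mul _ (hm _)]
    have := phi_rpow_tail hyp hfin hu (q := q + 1) (by linarith)
    rwa [show q + 1 + 1 = q + 2 by ring] at this
  have hS := tonelli_split (a := a) (b := b) (D := D) (k := fun _ => 1)
    (G := fun y => ENNReal.ofReal (q + 2) * phiE a b D y ^ (q + 1)) measurable_const
    ((hm _).const_mul _) x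
  simp only [one_mul, setLIntegral_one, htail x hx] at hS
  have h2 : ∫⁻ u in Ioi x, phiE a b D u ^ (q + 2) ∂(muM a b D) =
      ∫⁻ u in Ioi x, ∫⁻ y in Ioi u, ENNReal.ofReal (q + 2) * phiE a b D y ^ (q + 1)
        ∂(nuM a b D) ∂(muM a b D) := by
    refine lintegral_congr_ae ((ae_restrict_of_ae ae_muM).mono fun u hu => ?_)
    exact (htail u hu).symm
  rw [h2, ← hS, ← phi_rpow_tail hyp hfin hx hq]
  calc _ ≤ ENNReal.ofReal (q + 1) * ∫⁻ y in Ioi x,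
        ENNReal.ofReal (q + 2) * deltaND a b D * phiE a b D y ^ q ∂(nuM a b D) := by
        gcongr _ * ?_
        refine lintegral_mono_ae ((ae_restrict_of_ae ae_nuM).mono fun y hy => ?_)
        rw [ENNReal.rpow_add _ _ (phiE_pos hyp hy).ne' (hfin y), ENNReal.rpow_one]
        calc _ = ENNReal.ofReal (q + 2) * (muM a b D (Ioo 0 y) * phiE a b D y) *
              phiE a b D y ^ q := by ring
          _ ≤ _ := by gcongr; exact le_deltaND hy
    _ = _ := by rw [lintegral_const_mul _ (hm _)]; ring

/-- Integration by parts for `∫_0^x √φ dμ`, again with `μ(0,y) φ(y) ≤ δ`; this handles the first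
summand of `δ₁`. -/
theorem phi_sqrt_head_bound (hyp : Hyp a b D) (hfin : ∀ y, phiE a b D y ≠ ∞) {x : ℝ}
    (hx : x ∈ ooI D) :
    ∫⁻ u in Ioo 0 x, phiE a b D u ^ (1 / 2 : ℝ) ∂(muM a b D) ≤
      muM a b D (Ioo 0 x) * phiE a b D x ^ (1 / 2 : ℝ) +
        deltaND a b D * phiE a b D x ^ (-1 / 2 : ℝ) := by
  have hm : ∀ r : ℝ, Measurable (fun y => phiE a b D y ^ r) :=
    fun r => measurable_phiE.pow_const r
  have hhalf : ENNReal.ofReal (-1 / 2 + 1) = 2⁻¹ := by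
    rw [show (-1 / 2 + 1 : ℝ) = 2⁻¹ by norm_num, ENNReal.ofReal_inv_of_pos two_pos,
      ENNReal.ofReal_ofNat]
  have htail : ∀ u ∈ ooI D, 2⁻¹ * ∫⁻ y in Ioi u, phiE a b D y ^ (-1 / 2 : ℝ)
      ∂(nuM a b D) = phiE a b D u ^ (1 / 2 : ℝ) := fun u hu => by
    have := phi_rpow_tail hyp hfin hu (q := -1 / 2) (by norm_num)
    rwa [hhalf, show (-1 / 2 + 1 : ℝ) = 1 / 2 by norm_num] at this
  have hpt : ∀ u ∈ Ioo 0 x, phiE a b D u ^ (1 / 2 : ℝ) ≤ phiE a b D x ^ (1 / 2 : ℝ) +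
      1 * ∫⁻ y in Ioi u, 2⁻¹ * phiE a b D y ^ (-1 / 2 : ℝ) ∂((nuM a b D).restrict (Iic x)) := by
    intro u hu
    rw [← htail u (ooI_of_le hu.1 hu.2.le hx), ← htail x hx,
      Measure.restrict_restrict measurableSet_Ioi, Ioi_inter_Iic, lintegral_const_mul _ (hm _),
      one_mul, ← Ioc_union_Ioi_eq_Ioi hu.2.le,
      lintegral_union measurableSet_Ioi (Ioc_disjoint_Ioi le_rfl), mul_add, add_comm]
  calc _ ≤ ∫⁻ u in Ioo 0 x, (phiE a b D x ^ (1 / 2 : ℝ) +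
      1 * ∫⁻ y in Ioi u, 2⁻¹ * phiE a b D y ^ (-1 / 2 : ℝ) ∂((nuM a b D).restrict (Iic x)))
        ∂(muM a b D) := setLIntegral_mono' measurableSet_Ioo hpt
    _ = muM a b D (Ioo 0 x) * phiE a b D x ^ (1 / 2 : ℝ) + ∫⁻ y in Iic x,
          2⁻¹ * phiE a b D y ^ (-1 / 2 : ℝ) *
            ∫⁻ u in Iio y, 1 ∂((muM a b D).restrict (Ioo 0 x)) ∂(nuM a b D) := by
        rw [lintegral_add_left measurable_const, setLIntegral_const, mul_comm,
          tonelli ((muM a b D).restrict (Ioo 0 x)) ((nuM a b D).restrict (Iic x))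
            (k := fun _ => 1) measurable_const ((hm _).const_mul _)]
    _ ≤ muM a b D (Ioo 0 x) * phiE a b D x ^ (1 / 2 : ℝ) + ∫⁻ y in Iic x,
          2⁻¹ * deltaND a b D * phiE a b D y ^ (-3 / 2 : ℝ) ∂(nuM a b D) := by
        gcongr _ + ?_
        refine lintegral_mono_ae ((ae_restrict_of_ae ae_nuM).mono fun y hy => ?_)
        have h1 : ∫⁻ u in Iio y, 1 ∂((muM a b D).restrict (Ioo 0 x)) ≤ muM a b D (Ioo 0 y) := by
          rw [setLIntegral_one, ← measure_congr (Iio_ae_muM y)]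
          exact Measure.restrict_apply_le _ _
        have h2 : phiE a b D y ^ (-1 / 2 : ℝ) = phiE a b D y * phiE a b D y ^ (-3 / 2 : ℝ) := by
          conv_rhs => rw [← ENNReal.rpow_one (phiE a b D y), ← ENNReal.rpow_mul, one_mul,
            ← ENNReal.rpow_add _ _ (phiE_pos hyp hy).ne' (hfin y)]
          norm_num
        calc _ ≤ 2⁻¹ * phiE a b D y ^ (-1 / 2 : ℝ) * muM a b D (Ioo 0 y) := by gcongr
          _ = 2⁻¹ * (muM a b D (Ioo 0 y) * phiE a b D y) * phiE a b D y ^ (-3 / 2 : ℝ) := by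
            rw [h2]; ring
          _ ≤ _ := by gcongr; exact le_deltaND hy
    _ ≤ muM a b D (Ioo 0 x) * phiE a b D x ^ (1 / 2 : ℝ) +
          2⁻¹ * deltaND a b D * (2 * phiE a b D x ^ (-1 / 2 : ℝ)) := by
        rw [lintegral_const_mul _ (hm _), setLIntegral_congr (Iic_ae_nuM x)]
        gcongr
        exact phi_rpow_head hyp hfin hx
    _ = _ := by
        congr 1
        calc _ = (2⁻¹ * 2) * (deltaND a b D * phiE a b D x ^ (-1 / 2 : ℝ)) := by ring
          _ = _ := by rw [ENNReal.inv_mul_cancel two_ne_zero ofNat_ne_top, one_mul]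

/-- If `φ` is finite at one point of `(0, D)`, it is finite everywhere. -/
theorem phi_finite_of_ne (hyp : Hyp a b D) {x : ℝ} (hx : x ∈ ooI D) (h : phiE a b D x ≠ ∞) :
    ∀ y, phiE a b D y ≠ ∞ := fun _ => (phiE_lt_top hyp hx h).ne

theorem deltaND_eq_top (hyp : Hyp a b D) {x : ℝ} (hx : x ∈ ooI D) (h : phiE a b D x = ∞) :
    deltaND a b D = ∞ := by
  refine top_unique (le_trans (le_of_eq ?_) (le_deltaND hx))
  rw [h, ENNReal.mul_top (muM_pos hyp hx).ne']

theorem deltaND_le_delta1' : deltaND a b D ≤ delta1' a b D :=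
  iSup₂_mono fun _ _ => le_self_add

theorem delta1'_le (hyp : Hyp a b D) : delta1' a b D ≤ 2 * deltaND a b D := by
  refine iSup₂_le fun x hx => ?_
  by_cases h : phiE a b D x = ∞
  · rw [deltaND_eq_top hyp hx h, ENNReal.mul_top two_ne_zero]; exact le_top
  have hfin := phi_finite_of_ne hyp hx h
  have hb := phi_rpow_tail_bound hyp hfin hx (q := 0) (by norm_num)
  simp only [zero_add, ENNReal.ofReal_one, one_mul, ENNReal.ofReal_ofNat, ENNReal.rpow_one,
    ENNReal.rpow_two] at hb
  have h0 := (phiE_pos hyp hx).ne'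
  have he : muM a b D (Ioo 0 x) * phiE a b D x =
      muM a b D (Ioo 0 x) * phiE a b D x ^ 2 / phiE a b D x := by
    rw [pow_two, ← mul_assoc, ENNReal.mul_div_cancel_right h0 h]
  rw [he, ← ENNReal.add_div]
  exact ENNReal.div_le_of_le_mul hb

theorem delta1_le (hyp : Hyp a b D) : delta1 a b D ≤ 4 * deltaND a b D := by
  refine iSup₂_le fun x hx => ?_
  by_cases h : phiE a b D x = ∞
  · rw [deltaND_eq_top hyp hx h, ENNReal.mul_top (by norm_num)]; exact le_top
  have hfin := phi_finite_of_ne hyp hx h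
  have h0 := (phiE_pos hyp hx).ne'
  set s := phiE a b D x ^ (1 / 2 : ℝ) with hs
  have hs0 : s ≠ 0 := (ENNReal.rpow_pos (phiE_pos hyp hx) h).ne'
  have hsT : s ≠ ∞ := ENNReal.rpow_ne_top_of_nonneg (by norm_num) h
  have hinv : phiE a b D x ^ (-1 / 2 : ℝ) = s⁻¹ := by
    rw [hs, ← ENNReal.rpow_neg]; norm_num
  have hcube : phiE a b D x ^ (3 / 2 : ℝ) = s * s * s := by
    rw [hs, ← ENNReal.rpow_add _ _ h0 h, ← ENNReal.rpow_add _ _ h0 h]; norm_num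
  have hb := phi_rpow_tail_bound hyp hfin hx (q := -1 / 2) (by norm_num)
  rw [show (-1 / 2 + 1 : ℝ) = 1 / 2 by norm_num, show (-1 / 2 + 2 : ℝ) = 3 / 2 by norm_num, ← hs,
    hcube] at hb
  have hb2 : muM a b D (Ioo 0 x) * (s * s * s) +
      ∫⁻ u in Ioi x, phiE a b D u ^ (3 / 2 : ℝ) ∂(muM a b D) ≤ 3 * deltaND a b D * s := by
    have e1 : (2 : ℝ≥0∞) * ENNReal.ofReal (1 / 2) = 1 := by
      rw [← ENNReal.ofReal_ofNat, ← ENNReal.ofReal_mul zero_le_two]; norm_num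
    have e2 : (2 : ℝ≥0∞) * ENNReal.ofReal (3 / 2) = 3 := by
      rw [← ENNReal.ofReal_ofNat 2, ← ENNReal.ofReal_mul zero_le_two]; norm_num
    calc _ = 2 * ENNReal.ofReal (1 / 2) * (muM a b D (Ioo 0 x) * (s * s * s) +
          ∫⁻ u in Ioi x, phiE a b D u ^ (3 / 2 : ℝ) ∂(muM a b D)) := by rw [e1, one_mul]
      _ ≤ 2 * (ENNReal.ofReal (3 / 2) * deltaND a b D * s) := by rw [mul_assoc]; gcongr
      _ = _ := by rw [← mul_assoc, ← mul_assoc, e2]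
  have hh := phi_sqrt_head_bound hyp hfin hx
  rw [← hs, hinv] at hh
  set B := ∫⁻ u in Ioi x, phiE a b D u ^ (3 / 2 : ℝ) ∂(muM a b D)
  set M := muM a b D (Ioo 0 x)
  calc _ ≤ s * (M * s + deltaND a b D * s⁻¹) + B / s := by gcongr
    _ = deltaND a b D * (s * s⁻¹) + (M * (s * s) * (s / s) + B / s) := by
      rw [ENNReal.div_self hs0 hsT]; ring
    _ = deltaND a b D + (M * (s * s * s) + B) / s := by
      rw [ENNReal.mul_inv_cancel hs0 hsT, mul_one, ENNReal.add_div]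
      simp only [div_eq_mul_inv, mul_assoc]
    _ ≤ deltaND a b D + 3 * deltaND a b D := by
      gcongr
      exact ENNReal.div_le_of_le_mul hb2
    _ = _ := by ring

end

/-! ### The lower bound for `λ₀` -/

section
variable {a b : ℝ → ℝ} {D : ℝ≥0∞}

/-- The Cauchy-Schwarz inequality with a weight `w`. -/
theorem sq_lintegral_le {m : Measure ℝ} {g w : ℝ → ℝ≥0∞} (hg : Measurable g) (hw : Measurable w)
    (h0 : ∀ᵐ y ∂m, w y ≠ 0) (hT : ∀ᵐ y ∂m, w y ≠ ∞) :
    (∫⁻ y, g y ∂m) ^ 2 ≤ (∫⁻ y, g y ^ 2 / w y ∂m) * ∫⁻ y, w y ∂m := by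
  have hH := ENNReal.lintegral_mul_le_Lp_mul_Lq m Real.HolderConjugate.two_two
    (hg.div (hw.pow_const (1 / 2 : ℝ))).aemeasurable (hw.pow_const (1 / 2 : ℝ)).aemeasurable
  have e1 : ∫⁻ y, ((fun y => g y / w y ^ (1 / 2 : ℝ)) * fun y => w y ^ (1 / 2 : ℝ)) y ∂m =
      ∫⁻ y, g y ∂m := by
    refine lintegral_congr_ae ?_
    filter_upwards [h0, hT] with y h0 hT
    exact ENNReal.div_mul_cancel (ENNReal.rpow_pos (pos_iff_ne_zero.2 h0) hT).ne'
      (ENNReal.rpow_ne_top_of_nonneg (by norm_num) hT)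
  have hsq : ∀ y, (w y ^ (1 / 2 : ℝ)) ^ (2 : ℝ) = w y := fun y => by
    rw [← ENNReal.rpow_mul]; norm_num
  have e2 : ∫⁻ y, (g y / w y ^ (1 / 2 : ℝ)) ^ (2 : ℝ) ∂m = ∫⁻ y, g y ^ 2 / w y ∂m := by
    refine lintegral_congr fun y => ?_
    rw [ENNReal.div_rpow_of_nonneg _ _ zero_le_two, hsq, ENNReal.rpow_two]
  have e3 : ∫⁻ y, (w y ^ (1 / 2 : ℝ)) ^ (2 : ℝ) ∂m = ∫⁻ y, w y ∂m :=
    lintegral_congr hsq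
  have hH' : ∫⁻ y, g y ∂m ≤
      (∫⁻ y, g y ^ 2 / w y ∂m) ^ (1 / 2 : ℝ) * (∫⁻ y, w y ∂m) ^ (1 / 2 : ℝ) := by
    rw [← e1, ← e2, ← e3]; exact hH
  calc _ ≤ ((∫⁻ y, g y ^ 2 / w y ∂m) ^ (1 / 2 : ℝ) * (∫⁻ y, w y ∂m) ^ (1 / 2 : ℝ)) ^ 2 := by
        gcongr
    _ = _ := by
        rw [← ENNReal.rpow_two, ENNReal.mul_rpow_of_nonneg _ _ zero_le_two, ← ENNReal.rpow_mul,
          ← ENNReal.rpow_mul]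
        norm_num

/-- A test function is controlled by the integral of its derivative towards `D`. -/
theorem abs_test_le (hyp : Hyp a b D) {f : ℝ → ℝ} (hC : C1C D f) {p : ℝ}
    (hpD : ENNReal.ofReal p < D) (hpz : ∀ x, p < x → f x = 0) {x : ℝ} (hx : x ∈ ooI D) :
    ENNReal.ofReal |f x| ≤
      ∫⁻ y in Ioi x, ENNReal.ofReal (|deriv f y| * Real.exp (Cf a b y)) ∂(nuM a b D) := by
  obtain ⟨q, hq, hpq, hxq⟩ : ∃ q ∈ ooI D, p < q ∧ x < q := by
    have hmax : max p x ∈ ooI D := by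
      rcases max_choice p x with h | h
      · exact ⟨lt_max_of_lt_right hx.1, by rwa [h]⟩
      · rwa [h]
    obtain ⟨q, hq, h⟩ := exists_gt_ooI hmax
    exact ⟨q, hq, (le_max_left _ _).trans_lt h, (le_max_right _ _).trans_lt h⟩
  have hsub : Icc x q ⊆ ooI D := Icc_subset_ooI hx hq
  have hftc : ∫ y in x..q, deriv f y = f q - f x := by
    refine intervalIntegral.integral_eq_sub_of_hasDerivAt (fun y hy => ?_) ?_
    · rw [uIcc_of_le hxq.le] at hy
      exact (hC.2.1 y (hsub hy)).hasDerivAt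
    · refine ContinuousOn.intervalIntegrable ?_
      rw [uIcc_of_le hxq.le]
      exact hC.2.2.mono hsub
  rw [hpz q hpq, zero_sub, intervalIntegral.integral_of_le hxq.le] at hftc
  have h1 : ENNReal.ofReal |f x| ≤ ∫⁻ y in Ioc x q, ENNReal.ofReal |deriv f y| := by
    have := enorm_integral_le_lintegral_enorm (μ := volume.restrict (Ioc x q)) (deriv f)
    rw [hftc, enorm_neg] at this
    simpa only [Real.enorm_eq_ofReal_abs] using this
  refine h1.trans ?_
  rw [lintegral_nuM hyp measurableSet_Ioi]
  have h2 : ∀ y, dNu a b y * ENNReal.ofReal (|deriv f y| * Real.exp (Cf a b y)) =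
      ENNReal.ofReal |deriv f y| := fun y => by
    rw [dNu, ← ENNReal.ofReal_mul (Real.exp_pos _).le, Real.exp_neg]
    congr 1
    field_simp
  simp only [h2]
  exact lintegral_mono_set fun y hy => ⟨hy.1, hsub ⟨hy.1.le, hy.2⟩⟩

/-- The weighted Hardy inequality `μ(f²) ≤ δ₁ D(f)`, by a Schur test with weight
`F(y) = ∫_0^y √φ dμ`: Cauchy-Schwarz gives
`f(x)² ≤ ∫_x^D e^C f'² / F · ∫_x^D F dν`, the last factor is at most `δ₁ √φ(x)`, and integrating
in `x` against `μ` restores the factor `F`. -/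
theorem muL2_le (hyp : Hyp a b D) (h1 : delta1 a b D ≠ ∞) {f : ℝ → ℝ} (hC : C1C D f)
    {p : ℝ} (hpD : ENNReal.ofReal p < D) (hpz : ∀ x, p < x → f x = 0) :
    muL2 a b D f ≤ delta1 a b D * Dform a b D f := by
  have hm : Measurable (fun y => phiE a b D y ^ (1 / 2 : ℝ)) := measurable_phiE.pow_const _
  set F : ℝ → ℝ≥0∞ := fun y => ∫⁻ u in Ioo 0 y, phiE a b D u ^ (1 / 2 : ℝ) ∂(muM a b D) with hF
  have hFm : Measurable F :=
    Monotone.measurable fun _ _ h => lintegral_mono_set (Ioo_subset_Ioo_right h)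
  have hle : ∀ x ∈ ooI D, phiE a b D x ^ (1 / 2 : ℝ) * F x +
      (∫⁻ u in Set.Ioi x, phiE a b D u ^ (3 / 2 : ℝ) ∂(muM a b D)) /
        phiE a b D x ^ (1 / 2 : ℝ) ≤ delta1 a b D := fun x hx =>
    le_iSup₂ (f := fun x (_ : x ∈ ooI D) => phiE a b D x ^ (1 / 2 : ℝ) * F x +
      (∫⁻ u in Set.Ioi x, phiE a b D u ^ (3 / 2 : ℝ) ∂(muM a b D)) /
        phiE a b D x ^ (1 / 2 : ℝ)) x hx
  have hφ0 : ∀ x ∈ ooI D, phiE a b D x ^ (1 / 2 : ℝ) ≠ 0 := fun x hx => by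
    have := (phiE_pos hyp hx).ne'
    simp [ENNReal.rpow_eq_zero_iff, this]
  have hF0 : ∀ x ∈ ooI D, F x ≠ 0 := fun x hx =>
    (lintegral_muM_pos hyp hx hm fun u hu =>
      pos_iff_ne_zero.2 (hφ0 u (ooI_of_le hu.1 hu.2.le hx))).ne'
  have hprod : ∀ x ∈ ooI D, phiE a b D x ^ (1 / 2 : ℝ) * F x ≠ ∞ := fun x hx =>
    (le_self_add.trans_lt ((hle x hx).trans_lt h1.lt_top)).ne
  have hφT : ∀ x ∈ ooI D, phiE a b D x ^ (1 / 2 : ℝ) ≠ ∞ := fun x hx h =>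
    hprod x hx (by rw [h, ENNReal.top_mul (hF0 x hx)])
  have hFT : ∀ x ∈ ooI D, F x ≠ ∞ := fun x hx h =>
    hprod x hx (by rw [h, ENNReal.mul_top (hφ0 x hx)])
  have hcube : ∀ x, phiE a b D x ^ (1 / 2 : ℝ) * phiE a b D x = phiE a b D x ^ (3 / 2 : ℝ) :=
    fun x => by
      conv_lhs => rw [← ENNReal.rpow_one (phiE a b D x), ← ENNReal.rpow_mul, one_mul,
        ← ENNReal.rpow_add_of_nonneg _ _ (by norm_num) (by norm_num)]
      norm_num
  have hsq : ∀ x, phiE a b D x ^ (1 / 2 : ℝ) * phiE a b D x ^ (1 / 2 : ℝ) = phiE a b D x :=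
    fun x => by
      rw [← ENNReal.rpow_add_of_nonneg _ _ (by norm_num) (by norm_num)]
      norm_num
  have hFtail : ∀ x ∈ ooI D, ∫⁻ y in Ioi x, F y ∂(nuM a b D) ≤
      delta1 a b D * phiE a b D x ^ (1 / 2 : ℝ) := fun x hx => by
    have hS := tonelli_split (a := a) (b := b) (D := D) hm (G := fun _ => 1) measurable_const x
    simp only [one_mul, setLIntegral_one] at hS
    have hS' : ∫⁻ y in Ioi x, F y ∂(nuM a b D) = F x * phiE a b D x +
        ∫⁻ u in Ioi x, phiE a b D u ^ (3 / 2 : ℝ) ∂(muM a b D) := by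
      rw [hF, hS]
      congr 1
      exact lintegral_congr fun u => hcube u
    rw [hS']
    refine le_trans (le_of_eq ?_)
      (mul_le_mul_left (hle x hx) (phiE a b D x ^ (1 / 2 : ℝ)))
    rw [add_mul, ENNReal.div_mul_cancel (hφ0 x hx) (hφT x hx)]
    conv_lhs => rw [← hsq x]
    ring
  set g : ℝ → ℝ≥0∞ := fun y => ENNReal.ofReal (|deriv f y| * Real.exp (Cf a b y)) with hg
  have hgm : Measurable g :=
    ((measurable_deriv f).abs.mul (measurable_Cf hyp.1 hyp.2.1).exp).ennreal_ofReal
  have hgF : Measurable (fun y => g y ^ 2 / F y) := (hgm.pow_const 2).div hFm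
  have hD : ∫⁻ y, g y ^ 2 ∂(nuM a b D) = Dform a b D f := by
    rw [← setLIntegral_univ, lintegral_nuM hyp MeasurableSet.univ, univ_inter, Dform]
    refine lintegral_congr fun y => ?_
    rw [hg, dNu, ← ENNReal.ofReal_pow (by positivity), ← ENNReal.ofReal_mul (Real.exp_pos _).le,
      mul_pow, sq_abs, Real.exp_neg]
    congr 1
    field_simp
  calc muL2 a b D f
      ≤ ∫⁻ x, (delta1 a b D * phiE a b D x ^ (1 / 2 : ℝ)) *
          ∫⁻ y in Ioi x, g y ^ 2 / F y ∂(nuM a b D) ∂(muM a b D) := by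
        refine lintegral_mono_ae (ae_muM.mono fun x hx => ?_)
        calc ENNReal.ofReal (f x ^ 2) = ENNReal.ofReal |f x| ^ 2 := by
              rw [← ENNReal.ofReal_pow (abs_nonneg _), sq_abs]
          _ ≤ (∫⁻ y in Ioi x, g y ∂(nuM a b D)) ^ 2 := by
              gcongr
              exact abs_test_le hyp hC hpD hpz hx
          _ ≤ (∫⁻ y in Ioi x, g y ^ 2 / F y ∂(nuM a b D)) * ∫⁻ y in Ioi x, F y ∂(nuM a b D) :=
              sq_lintegral_le hgm hFm (ae_restrict_of_ae (ae_nuM.mono hF0))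
                (ae_restrict_of_ae (ae_nuM.mono hFT))
          _ ≤ _ := by
              rw [mul_comm]
              gcongr
              exact hFtail x hx
    _ = delta1 a b D * ∫⁻ y, g y ^ 2 / F y *
          ∫⁻ u in Iio y, phiE a b D u ^ (1 / 2 : ℝ) ∂(muM a b D) ∂(nuM a b D) := by
        rw [tonelli _ _ (hm.const_mul _) hgF, ← lintegral_const_mul _ ?_]
        · refine lintegral_congr fun y => ?_
          rw [lintegral_const_mul _ hm]
          ring
        · exact hgF.mul (Monotone.measurable fun _ _ h => lintegral_mono_set (Iio_subset_Iio h))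
    _ = delta1 a b D * ∫⁻ y, g y ^ 2 ∂(nuM a b D) := by
        congr 1
        refine lintegral_congr_ae (ae_nuM.mono fun y hy => ?_)
        simp only
        rw [setLIntegral_congr (Iio_ae_muM y)]
        exact ENNReal.div_mul_cancel (hF0 y hy) (hFT y hy)
    _ = _ := by rw [hD]

theorem inv_delta1_le_lam0 (hyp : Hyp a b D) : (delta1 a b D)⁻¹ ≤ lam0 a b D := by
  by_cases h1 : delta1 a b D = ∞
  · simp [h1]
  refine le_sInf ?_
  rintro r ⟨f, hC, ⟨p, -, hpD, hpz⟩, -, hn, rfl⟩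
  have h := muL2_le hyp h1 hC hpD hpz
  rw [hn] at h
  have h0 : delta1 a b D ≠ 0 := by rintro h0; simp [h0] at h
  exact (ENNReal.inv_le_iff_le_mul (fun _ => h0) (fun h => absurd h h1)).2 h

end

/-! ### The upper bound for `λ₀` -/

section
variable {a b : ℝ → ℝ} {D : ℝ≥0∞}

/-- The Rayleigh quotient bound for test functions that are not normalized. -/
theorem lam0_mul_le {f : ℝ → ℝ} (hC : C1C D f)
    (hp : ∃ p : ℝ, 0 ≤ p ∧ ENNReal.ofReal p < D ∧ ∀ x, p < x → f x = 0)
    (hfD : D ≠ ∞ → f D.toReal = 0) (hT : muL2 a b D f ≠ ∞) :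
    lam0 a b D * muL2 a b D f ≤ Dform a b D f := by
  by_cases h0 : muL2 a b D f = 0
  · simp [h0]
  set c := (muL2 a b D f).toReal with hc
  have hcpos : 0 < c := ENNReal.toReal_pos h0 hT
  have hcE : ENNReal.ofReal c = muL2 a b D f := ENNReal.ofReal_toReal hT
  set k : ℝ := (Real.sqrt c)⁻¹ with hk
  have hk2 : k ^ 2 = c⁻¹ := by rw [hk, inv_pow, Real.sq_sqrt hcpos.le]
  have hkE : ENNReal.ofReal (k ^ 2) = (muL2 a b D f)⁻¹ := by
    rw [hk2, ENNReal.ofReal_inv_of_pos hcpos, hcE]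
  have hder : ∀ x, deriv (fun y => k * f y) x = k * deriv f x := fun x =>
    deriv_const_mul_field k
  obtain ⟨p, hp0, hpD, hpz⟩ := hp
  have hle : lam0 a b D ≤ Dform a b D (fun y => k * f y) := by
    refine sInf_le ⟨fun y => k * f y, ⟨continuousOn_const.mul hC.1,
      fun x hx => (hC.2.1 x hx).const_mul k, ?_⟩,
      ⟨p, hp0, hpD, fun x hx => by simp [hpz x hx]⟩, fun h => by simp [hfD h], ?_, rfl⟩
    · rw [show deriv (fun y => k * f y) = fun x => k * deriv f x from funext hder]
      exact continuousOn_const.mul hC.2.2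
    · calc muL2 a b D (fun y => k * f y)
          = ENNReal.ofReal (k ^ 2) * muL2 a b D f := by
            rw [muL2, muL2, ← lintegral_const_mul' _ _ ENNReal.ofReal_ne_top]
            refine lintegral_congr fun x => ?_
            rw [mul_pow, ENNReal.ofReal_mul (sq_nonneg _)]
        _ = 1 := by rw [hkE, ENNReal.inv_mul_cancel h0 hT]
  have hDk : Dform a b D (fun y => k * f y) = (muL2 a b D f)⁻¹ * Dform a b D f := by
    rw [Dform, Dform, ← hkE, ← lintegral_const_mul' _ _ ENNReal.ofReal_ne_top]
    refine lintegral_congr fun x => ?_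
    rw [hder, ← ENNReal.ofReal_mul (sq_nonneg _)]
    congr 1
    ring
  calc _ ≤ (muL2 a b D f)⁻¹ * Dform a b D f * muL2 a b D f := by rw [← hDk]; gcongr
    _ = (muL2 a b D f)⁻¹ * muL2 a b D f * Dform a b D f := by ring
    _ = _ := by rw [ENNReal.inv_mul_cancel h0 hT, one_mul]

/-- The Rayleigh quotient bound for the test function `f(x) = ∫_x^D g dν`, where `g` is continuous,
takes values in `[0, 1]` and vanishes near `D`. Such an `f` is `C¹` because `e^{-C}` is continuous;
the energy is `∫ g² dν`, which is at most `∫ g dν`. -/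
theorem lam0_test (hyp : Hyp a b D) {g : ℝ → ℝ} (hg : Continuous g) (hg0 : ∀ y, 0 ≤ g y)
    (hg1 : ∀ y, g y ≤ 1) {β : ℝ} (hβ : β ∈ ooI D)
    (hgβ : ∀ y, β ≤ y → g y = 0) :
    lam0 a b D * ∫⁻ x, (∫⁻ y in Ioi x, ENNReal.ofReal (g y) ∂(nuM a b D)) ^ 2 ∂(muM a b D) ≤
      ∫⁻ y, ENNReal.ofReal (g y) ∂(nuM a b D) := by
  -- Freezing `C` outside `[0, β]`, where `g` vanishes, gives a globally continuous integrand.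
  set H : ℝ → ℝ := fun y => g y * Real.exp (-Cf a b (projIcc 0 β hβ.1.le y)) with hH
  have hHc : Continuous H := by
    refine hg.mul (Real.continuous_exp.comp (Continuous.neg ?_))
    exact (continuousOn_iff_continuous_domRestrict.1 (continuousOn_Cf hyp hβ)).comp
      continuous_projIcc
  have hHI : ∀ y, 0 < y → H y = g y * Real.exp (-Cf a b y) := fun y hy => by
    by_cases h : y ≤ β
    · simp only [hH]; rw [projIcc_of_mem hβ.1.le ⟨hy.le, h⟩]
    · simp only [hH]; rw [hgβ y (not_le.1 h).le]; simp
  have hHβ : ∀ y, β ≤ y → H y = 0 := fun y hy => by simp only [hH]; rw [hgβ y hy, zero_mul]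
  have hHnn : ∀ y, 0 ≤ H y := fun y => mul_nonneg (hg0 y) (Real.exp_pos _).le
  set f : ℝ → ℝ := fun x => ∫ t in x..β, H t with hf
  have hfd : ∀ x, HasDerivAt f (-H x) x := fun x =>
    intervalIntegral.integral_hasDerivAt_left (hHc.intervalIntegrable _ _)
      (hHc.stronglyMeasurableAtFilter _ _) hHc.continuousAt
  have hfder : deriv f = fun x => -H x := funext fun x => (hfd x).deriv
  have hfc : Continuous f := continuous_iff_continuousAt.2 fun x => (hfd x).continuousAt
  have hfz : ∀ x, β < x → f x = 0 := fun x hx => by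
    rw [hf]
    simp only
    rw [intervalIntegral.integral_congr (g := fun _ => 0), intervalIntegral.integral_zero]
    intro y hy
    rw [uIcc_of_ge hx.le] at hy
    exact hHβ y hy.1
  have hfE : ∀ x ∈ ooI D, ENNReal.ofReal (f x) =
      ∫⁻ y in Ioi x, ENNReal.ofReal (g y) ∂(nuM a b D) := fun x hx => by
    have h1 : ∫⁻ y in Ioi x, ENNReal.ofReal (g y) ∂(nuM a b D) =
        ∫⁻ y in Ioi x ∩ ooI D, ENNReal.ofReal (H y) := by
      rw [lintegral_nuM hyp measurableSet_Ioi]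
      refine setLIntegral_congr_fun (measurableSet_Ioi.inter (measurableSet_ooI D)) fun y hy => ?_
      rw [hHI y hy.2.1, dNu, ← ENNReal.ofReal_mul (Real.exp_pos _).le, mul_comm]
    rw [h1]
    rcases le_or_gt x β with hxβ | hxβ
    · rw [hf]
      simp only
      rw [intervalIntegral.integral_of_le hxβ, ofReal_integral_eq_lintegral_ofReal
        ((hHc.intervalIntegrable x β).1) (Eventually.of_forall hHnn),
        ← lintegral_indicator measurableSet_Ioc,
        ← lintegral_indicator (measurableSet_Ioi.inter (measurableSet_ooI D))]
      refine lintegral_congr fun y => ?_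
      by_cases hy : y ∈ Ioc x β
      · have hy' : y ∈ Ioi x ∩ ooI D := ⟨hy.1, ooI_of_le (hx.1.trans hy.1) hy.2 hβ⟩
        rw [indicator_of_mem hy, indicator_of_mem hy']
      · rw [indicator_of_notMem hy]
        by_cases hy' : y ∈ Ioi x ∩ ooI D
        · rw [indicator_of_mem hy', hHβ y (not_le.1 fun h => hy ⟨hy'.1, h⟩).le]
          simp
        · rw [indicator_of_notMem hy']
    · rw [hfz x hxβ, ENNReal.ofReal_zero, eq_comm,
        lintegral_eq_zero_iff hHc.measurable.ennreal_ofReal]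
      filter_upwards [ae_restrict_mem (measurableSet_Ioi.inter (measurableSet_ooI D))] with y hy
      simp [hHβ y (hxβ.trans hy.1).le]
  have hfnn : ∀ x ∈ ooI D, 0 ≤ f x := fun x hx => by
    rcases le_or_gt x β with h | h
    · exact intervalIntegral.integral_nonneg h fun y _ => hHnn y
    · exact (hfz x h).ge
  have hmu : ∫⁻ x, (∫⁻ y in Ioi x, ENNReal.ofReal (g y) ∂(nuM a b D)) ^ 2 ∂(muM a b D) =
      muL2 a b D f := by
    refine lintegral_congr_ae (ae_muM.mono fun x hx => ?_)
    simp only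
    rw [← hfE x hx, ENNReal.ofReal_pow (hfnn x hx)]
  have hTot : ∫⁻ y, ENNReal.ofReal (g y) ∂(nuM a b D) < ∞ := by
    calc _ ≤ ∫⁻ y, (Iic β).indicator (fun _ => 1) y ∂(nuM a b D) := by
          refine lintegral_mono fun y => ?_
          by_cases hy : y ∈ Iic β
          · rw [indicator_of_mem hy]; exact ENNReal.ofReal_le_one.2 (hg1 y)
          · rw [hgβ y (not_le.1 hy).le]; simp
      _ < ∞ := by
          rw [lintegral_indicator measurableSet_Iic, setLIntegral_one]
          exact nuM_lt_top hyp hβ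
  have hfin : muL2 a b D f ≠ ∞ := by
    rw [← hmu]
    refine ne_of_lt ?_
    calc _ ≤ ∫⁻ x, (Iic β).indicator (fun _ =>
          (∫⁻ y, ENNReal.ofReal (g y) ∂(nuM a b D)) ^ 2) x ∂(muM a b D) := by
          refine lintegral_mono fun x => ?_
          by_cases hx : x ∈ Iic β
          · rw [indicator_of_mem hx]
            exact pow_le_pow_left' (setLIntegral_le_lintegral _ _) 2
          · rw [indicator_of_notMem hx, setLIntegral_congr_fun (g := fun _ => 0) measurableSet_Ioi]
            · simp
            · intro y hy
              simp [hgβ y ((not_le.1 hx).trans hy).le]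
      _ < ∞ := by
          rw [lintegral_indicator measurableSet_Iic, setLIntegral_const]
          exact ENNReal.mul_lt_top (ENNReal.pow_lt_top hTot) (muM_lt_top hyp hβ)
  rw [hmu]
  refine (lam0_mul_le ⟨hfc.continuousOn, fun x _ => (hfd x).differentiableAt, ?_⟩
    ⟨β, hβ.1.le, hβ.2, hfz⟩ (fun hD => hfz _ ?_) hfin).trans ?_
  · rw [hfder]; exact hHc.neg.continuousOn
  · exact (ENNReal.ofReal_lt_iff_lt_toReal hβ.1.le hD).1 hβ.2
  · rw [← setLIntegral_univ, lintegral_nuM hyp MeasurableSet.univ, univ_inter, Dform]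
    refine setLIntegral_mono' (measurableSet_ooI D) fun y hy => ?_
    rw [hfder, dNu, ← ENNReal.ofReal_mul (Real.exp_pos _).le]
    refine ENNReal.ofReal_le_ofReal ?_
    simp only
    rw [hHI y hy.1, neg_sq, mul_pow, Real.exp_neg]
    have he := Real.exp_pos (Cf a b y)
    calc _ = (Real.exp (Cf a b y))⁻¹ * g y ^ 2 := by field_simp
      _ ≤ _ := by
        gcongr
        nlinarith [hg0 y, hg1 y]

/-- Continuous cut-offs increasing to the indicator of `(x, D)`, when `d n` increases to `D`. -/
def cutoff (x : ℝ) (d : ℕ → ℝ) (n : ℕ) (y : ℝ) : ℝ :=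
  max 0 (min 1 (n * min (y - x) (d n - y)))

theorem continuous_cutoff (x : ℝ) (d : ℕ → ℝ) (n : ℕ) : Continuous (cutoff x d n) := by
  unfold cutoff; fun_prop

theorem cutoff_eq_zero {x : ℝ} {d : ℕ → ℝ} {n : ℕ} {y : ℝ} (h : min (y - x) (d n - y) ≤ 0) :
    cutoff x d n y = 0 :=
  max_eq_left ((min_le_right _ _).trans (mul_nonpos_of_nonneg_of_nonpos n.cast_nonneg h))

theorem monotone_cutoff {x : ℝ} {d : ℕ → ℝ} (hd : Monotone d) (y : ℝ) :
    Monotone fun n => cutoff x d n y := by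
  intro i j hij
  rcases le_or_gt (min (y - x) (d i - y)) 0 with h | h
  · simp only
    rw [cutoff_eq_zero h]
    exact le_max_left _ _
  · refine max_le_max le_rfl (min_le_min le_rfl ?_)
    have h2 := hd hij
    gcongr

theorem iSup_cutoff {x : ℝ} {d : ℕ → ℝ} (hd : Monotone d) {y : ℝ} (hy : ∃ n, y < d n) :
    ⨆ n, ENNReal.ofReal (cutoff x d n y) = (Ioi x).indicator (fun _ => 1) y := by
  by_cases hxy : y ∈ Ioi x
  · rw [indicator_of_mem hxy]
    refine le_antisymm (iSup_le fun n => ENNReal.ofReal_le_one.2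
      (max_le zero_le_one (min_le_left _ _))) ?_
    obtain ⟨m, hm⟩ := hy
    have hc : 0 < min (y - x) (d m - y) := lt_min (sub_pos.2 (mem_Ioi.1 hxy)) (sub_pos.2 hm)
    obtain ⟨k, hk⟩ := exists_nat_ge (1 / min (y - x) (d m - y))
    rw [div_le_iff₀ hc] at hk
    refine le_iSup_of_le (max k m) ?_
    rw [← ENNReal.ofReal_one]
    refine ENNReal.ofReal_le_ofReal ((le_min le_rfl (hk.trans ?_)).trans (le_max_right _ _))
    have h2 : d m ≤ d (max k m) := hd (le_max_right _ _)
    have h3 : (k : ℝ) ≤ (max k m : ℕ) := Nat.cast_le.2 (le_max_left _ _)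
    gcongr
  · rw [indicator_of_notMem hxy]
    refine iSup_eq_zero.2 fun n => ?_
    rw [cutoff_eq_zero ((min_le_left _ _).trans (sub_nonpos.2 (not_lt.1 hxy)))]
    simp

/-- `λ₀` times each term of the supremum `δ₁'` is at most `1`: the term is the limit of
`μ(f²)/D(f)` for `f = ∫_·^D g dν`, with `g` increasing to the indicator of `(x, D)`. -/
theorem lam0_mul_term_le (hyp : Hyp a b D) {x : ℝ} (hx : x ∈ ooI D) :
    lam0 a b D * (muM a b D (Ioo 0 x) * phiE a b D x +
      (∫⁻ u in Ioi x, phiE a b D u ^ 2 ∂(muM a b D)) / phiE a b D x) ≤ 1 := by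
  obtain ⟨d, hdm, hdI, hd⟩ := exists_exhaust (bot_le.trans_lt hx.2)
  set P : ℕ → ℝ → ℝ≥0∞ := fun n u =>
    ∫⁻ y in Ioi u, ENNReal.ofReal (cutoff x d n y) ∂(nuM a b D) with hP
  have hmeas : ∀ n, Measurable (fun y => ENNReal.ofReal (cutoff x d n y)) := fun n =>
    (continuous_cutoff x d n).measurable.ennreal_ofReal
  have hPm : ∀ n, Measurable (P n) := fun n =>
    Antitone.measurable fun _ _ h => lintegral_mono_set (Ioi_subset_Ioi h)
  have hmonoP : ∀ u, Monotone fun n => P n u := fun u i j hij =>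
    lintegral_mono fun y => ENNReal.ofReal_le_ofReal (monotone_cutoff hdm y hij)
  have hlim : ∀ u, Tendsto (fun n => P n u) atTop (𝓝 (phiE a b D (max u x))) := fun u => by
    have h1 : ⨆ n, P n u = phiE a b D (max u x) := by
      simp only [hP]
      rw [← lintegral_iSup hmeas fun i j hij y =>
        ENNReal.ofReal_le_ofReal (monotone_cutoff hdm y hij)]
      have : ∀ᵐ y ∂((nuM a b D).restrict (Ioi u)), ⨆ n, ENNReal.ofReal (cutoff x d n y) =
          (Ioi x).indicator (fun _ => 1) y :=
        ae_restrict_of_ae (ae_nuM.mono fun y hy => iSup_cutoff hdm (hd y hy))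
      rw [lintegral_congr_ae this, lintegral_indicator measurableSet_Ioi, setLIntegral_one,
        Measure.restrict_apply measurableSet_Ioi, Ioi_inter_Ioi, sup_comm]
      rfl
    rw [← h1]
    exact tendsto_atTop_iSup (hmonoP u)
  have htot : ∀ n u, u ≤ x → P n u = ∫⁻ y, ENNReal.ofReal (cutoff x d n y) ∂(nuM a b D) :=
    fun n u hu => by
      simp only [hP]
      rw [← lintegral_indicator measurableSet_Ioi]
      refine lintegral_congr fun y => ?_
      by_cases hy : y ∈ Ioi u
      · rw [indicator_of_mem hy]
      · rw [indicator_of_notMem hy, cutoff_eq_zero ((min_le_left _ _).trans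
          (sub_nonpos.2 ((not_lt.1 hy).trans hu)))]
        simp
  have htest : ∀ n, lam0 a b D * ∫⁻ u, P n u ^ 2 ∂(muM a b D) ≤ P n x := fun n => by
    rw [htot n x le_rfl]
    exact lam0_test hyp (continuous_cutoff x d n) (fun y => le_max_left _ _)
      (fun y => max_le zero_le_one (min_le_left _ _)) (hdI n)
      (fun y hy => cutoff_eq_zero ((min_le_right _ _).trans (sub_nonpos.2 hy)))
  have hMpos := muM_pos hyp hx
  have hφpos := phiE_pos hyp hx
  -- When `φ = ∞` the totals `P n x` are finite but unbounded, which forces `λ₀ = 0`.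
  by_cases hφ : phiE a b D x = ∞
  · have hPfin : ∀ n, P n x ≠ ∞ := fun n => by
      refine ne_of_lt (lt_of_le_of_lt ?_ (nuM_lt_top hyp (hdI n)))
      rw [htot n x le_rfl, ← setLIntegral_one, ← lintegral_indicator measurableSet_Iic]
      refine lintegral_mono fun y => ?_
      by_cases hy : y ∈ Iic (d n)
      · rw [indicator_of_mem hy]
        exact ENNReal.ofReal_le_one.2 (max_le zero_le_one (min_le_left _ _))
      · rw [cutoff_eq_zero ((min_le_right _ _).trans (sub_nonpos.2 (not_le.1 hy).le))]
        simp
    have hle : ∀ n, lam0 a b D * muM a b D (Ioo 0 x) * P n x ≤ 1 := fun n => by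
      by_cases h0 : P n x = 0
      · simp [h0]
      have h1 : muM a b D (Ioo 0 x) * P n x ^ 2 ≤ ∫⁻ u, P n u ^ 2 ∂(muM a b D) := by
        rw [mul_comm, ← setLIntegral_const]
        refine le_trans (setLIntegral_mono' measurableSet_Ioo fun u hu => ?_)
          (setLIntegral_le_lintegral _ _)
        rw [htot n u hu.2.le, htot n x le_rfl]
      have h2 : lam0 a b D * muM a b D (Ioo 0 x) * P n x * P n x ≤ 1 * P n x := by
        calc _ = lam0 a b D * (muM a b D (Ioo 0 x) * P n x ^ 2) := by ring
          _ ≤ lam0 a b D * ∫⁻ u, P n u ^ 2 ∂(muM a b D) := by gcongr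
          _ ≤ _ := by rw [one_mul]; exact htest n
      exact (ENNReal.mul_le_mul_iff_left h0 (hPfin n)).1 h2
    have hl := hlim x
    rw [max_self, hφ] at hl
    have h3 : lam0 a b D * muM a b D (Ioo 0 x) * ∞ ≤ 1 :=
      le_of_tendsto' (ENNReal.Tendsto.const_mul hl (Or.inl ENNReal.top_ne_zero)) hle
    have h4 : lam0 a b D = 0 := by
      by_contra h
      rw [ENNReal.mul_top (mul_ne_zero h hMpos.ne')] at h3
      simp at h3
    simp [h4]
  · have hl : Tendsto (fun n => ∫⁻ u, P n u ^ 2 ∂(muM a b D)) atTop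
        (𝓝 (∫⁻ u, phiE a b D (max u x) ^ 2 ∂(muM a b D))) :=
      lintegral_tendsto_of_tendsto_of_monotone (fun n => ((hPm n).pow_const 2).aemeasurable)
        (Eventually.of_forall fun u i j hij => pow_le_pow_left' (hmonoP u hij) 2)
        (Eventually.of_forall fun u => ENNReal.Tendsto.pow (hlim u))
    have hsplit : ∫⁻ u, phiE a b D (max u x) ^ 2 ∂(muM a b D) =
        muM a b D (Ioo 0 x) * phiE a b D x ^ 2 +
          ∫⁻ u in Ioi x, phiE a b D u ^ 2 ∂(muM a b D) := by
      rw [← lintegral_add_compl _ (measurableSet_Iic (a := x)), compl_Iic]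
      congr 1
      · rw [← measure_congr (Iic_ae_muM x), mul_comm, ← setLIntegral_const]
        refine setLIntegral_congr_fun measurableSet_Iic fun u hu => ?_
        rw [max_eq_right hu]
      · refine setLIntegral_congr_fun measurableSet_Ioi fun u hu => ?_
        rw [max_eq_left (le_of_lt hu)]
    rw [hsplit] at hl
    have hne : muM a b D (Ioo 0 x) * phiE a b D x ^ 2 +
        ∫⁻ u in Ioi x, phiE a b D u ^ 2 ∂(muM a b D) ≠ 0 := by
      have : muM a b D (Ioo 0 x) * phiE a b D x ^ 2 ≠ 0 :=
        mul_ne_zero hMpos.ne' (pow_ne_zero 2 hφpos.ne')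
      exact fun h => this (add_eq_zero.1 h).1
    have hPle : ∀ n, P n x ≤ phiE a b D x := fun n => by
      have h := (hmonoP x).ge_of_tendsto (hlim x) n
      rwa [max_self] at h
    have hfinal := le_of_tendsto' (ENNReal.Tendsto.const_mul (a := lam0 a b D) hl (Or.inl hne))
      fun n => (htest n).trans (hPle n)
    have he : muM a b D (Ioo 0 x) * phiE a b D x =
        muM a b D (Ioo 0 x) * phiE a b D x ^ 2 / phiE a b D x := by
      rw [pow_two, ← mul_assoc, ENNReal.mul_div_cancel_right hφpos.ne' hφ]
    rw [he, ← ENNReal.add_div, ← mul_div_assoc]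
    exact ENNReal.div_le_of_le_mul (by rwa [one_mul])

theorem lam0_le_inv_delta1' (hyp : Hyp a b D) : lam0 a b D ≤ (delta1' a b D)⁻¹ := by
  rw [ENNReal.le_inv_iff_le_inv]
  refine iSup₂_le fun x hx => ?_
  rw [ENNReal.le_inv_iff_mul_le, mul_comm]
  exact lam0_mul_term_le hyp hx

end

/-! ### The estimates -/

/-- Corollary 2.6: improved estimates
`δ⁻¹ ≥ (δ₁')⁻¹ ≥ λ₀ ≥ δ₁⁻¹ ≥ (4δ)⁻¹` with `δ ≤ δ₁' ≤ 2δ`. -/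
theorem nd_improved_estimates
    (a b : ℝ → ℝ) (D : ℝ≥0∞) (hD : 0 < D) (hyp : Hyp a b D) :
    (delta1' a b D)⁻¹ ≤ (deltaND a b D)⁻¹ ∧
    lam0 a b D ≤ (delta1' a b D)⁻¹ ∧
    (delta1 a b D)⁻¹ ≤ lam0 a b D ∧
    (4 * deltaND a b D)⁻¹ ≤ (delta1 a b D)⁻¹ ∧
    deltaND a b D ≤ delta1' a b D ∧ delta1' a b D ≤ 2 * deltaND a b D :=
  ⟨ENNReal.inv_le_inv.2 deltaND_le_delta1', lam0_le_inv_delta1' hyp, inv_delta1_le_lam0 hyp,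
    ENNReal.inv_le_inv.2 (delta1_le hyp), deltaND_le_delta1', delta1'_le hyp⟩
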